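/- The real number I_tt := −∫_{−2}^{−1} x(2+x)/(2x²+4x+4)² dx + ∫_{−1}^{1} 3x²/(1+x⁴)² dx − ∫₁² x(x−2)/(2x²−4x+4)² dx is strictly greater than 1/4. -/

import Mathlib

/-! Both tail integrands are nonpositive on their intervals, so the subtracted tails only help. On
`[-1, 1]` the denominator `(1 + x ^ 4) ^ 2` is at most `4`, so the central integral is at least
`∫ 3 x ^ 2 / 4 = 1 / 2`. -/

open MeasureTheory

theorem integral_sub_mul_sub_div_sq_nonpos {a b r s : ℝ} (hab : a ≤ b) (hra : r ≤ a) (hbs : b ≤ s)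
    (q : ℝ → ℝ) (μ : Measure ℝ) : ∫ x in a..b, (x - r) * (x - s) / q x ^ 2 ∂μ ≤ 0 := by
  rw [← neg_nonneg, ← intervalIntegral.integral_neg]
  refine intervalIntegral.integral_nonneg hab fun x hx ↦ neg_nonneg.2 ?_
  have hnum : (x - r) * (x - s) ≤ 0 :=
    mul_nonpos_of_nonneg_of_nonpos (sub_nonneg.2 (hra.trans hx.1)) (sub_nonpos.2 (hx.2.trans hbs))
  exact div_nonpos_of_nonpos_of_nonneg hnum (sq_nonneg _)

theorem one_add_pow_pos_of_even {K : Type*} [Field K] [LinearOrder K] [IsStrictOrderedRing K]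
    {n : ℕ} (hn : Even n) (x : K) : 0 < 1 + x ^ n :=
  add_pos_of_pos_of_nonneg one_pos (hn.pow_nonneg x)

theorem pow_div_two_pow_le_pow_div_one_add_pow {K : Type*} [Field K] [LinearOrder K]
    [IsStrictOrderedRing K] {m n : ℕ} (hm : Even m) (hn : Even n) (k : ℕ) {x : K} (hx : |x| ≤ 1) :
    x ^ m / 2 ^ k ≤ x ^ m / (1 + x ^ n) ^ k := by
  have hpos : 0 < 1 + x ^ n := one_add_pow_pos_of_even hn x
  have hle : 1 + x ^ n ≤ 2 := by
    rw [← one_add_one_eq_two, ← hn.pow_abs]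
    gcongr
    exact pow_le_one₀ (abs_nonneg x) hx
  have hnum : 0 ≤ x ^ m := hm.pow_nonneg x
  gcongr

theorem le_integral_pow_div_one_add_pow {m n : ℕ} (hm : Even m) (hn : Even n) (k : ℕ) {a b : ℝ}
    (ha : -1 ≤ a) (hab : a ≤ b) (hb : b ≤ 1) :
    (b ^ (m + 1) - a ^ (m + 1)) / (m + 1) / 2 ^ k ≤ ∫ x in a..b, x ^ m / (1 + x ^ n) ^ k := by
  have hcont : Continuous fun x : ℝ ↦ x ^ m / (1 + x ^ n) ^ k :=
    (continuous_pow m).div (by fun_prop) fun x ↦ (pow_pos (one_add_pow_pos_of_even hn x) k).ne'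
  calc (b ^ (m + 1) - a ^ (m + 1)) / (m + 1) / 2 ^ k
      = ∫ x in a..b, x ^ m / 2 ^ k := by rw [intervalIntegral.integral_div, integral_pow]
    _ ≤ ∫ x in a..b, x ^ m / (1 + x ^ n) ^ k :=
        intervalIntegral.integral_mono_on hab
          (((continuous_pow m).div_const _).intervalIntegrable a b) (hcont.intervalIntegrable a b)
          fun x hx ↦ pow_div_two_pow_le_pow_div_one_add_pow hm hn k
            (abs_le.2 ⟨ha.trans hx.1, hx.2.trans hb⟩)

/-- The tail-tail contribution `I_tt` to the derivative of the horizontal velocity at the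
outer vertical tangents of the curve constructed in the paper is strictly greater than `1/4`. -/
theorem Itt_gt_quarter :
    (1/4 : ℝ) < -(∫ x in (-2:ℝ)..(-1), x*(2+x)/(2*x^2+4*x+4)^2)
      + (∫ x in (-1:ℝ)..1, 3*x^2/(1+x^4)^2)
      - (∫ x in (1:ℝ)..2, x*(x-2)/(2*x^2-4*x+4)^2) := by
  have left_tail : ∫ x in (-2:ℝ)..(-1), x*(2+x)/(2*x^2+4*x+4)^2 ≤ 0 := by
    have factored (x : ℝ) : x*(2+x) = (x - -2) * (x - 0) := by ring
    simp_rw [factored]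
    exact integral_sub_mul_sub_div_sq_nonpos (by norm_num) le_rfl (by norm_num) _ volume
  have right_tail : ∫ x in (1:ℝ)..2, x*(x-2)/(2*x^2-4*x+4)^2 ≤ 0 := by
    simpa only [sub_zero] using integral_sub_mul_sub_div_sq_nonpos (r := 0)
      one_le_two zero_le_one le_rfl _ volume
  have center : (1/2 : ℝ) ≤ ∫ x in (-1:ℝ)..1, 3*x^2/(1+x^4)^2 := by
    have hsixth : (1/6 : ℝ) ≤ ∫ x in (-1:ℝ)..1, x^2/(1+x^4)^2 := by
      convert le_integral_pow_div_one_add_pow (m := 2) (n := 4) (by decide) (by decide) 2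
        le_rfl (neg_le_self zero_le_one) le_rfl using 1
      norm_num
    simp only [mul_div_assoc, intervalIntegral.integral_const_mul]
    linarith
  linarith
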